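/- Let H and K be complex Hilbert spaces, n ∈ ℕ, V₁,…,Vₙ ∈ B(H,K), and let b ∈ B(K) be an operator such that b (V_l V_k*) = (V_l V_k*) b for all k, l ∈ {1,…,n}. Then for all vectors ξ₁,…,ξₙ ∈ K one has ‖Σ_{k=1}^n V_k* b ξ_k‖ ≤ ‖b‖ · ‖Σ_{k=1}^n V_k* ξ_k‖. -/

import Mathlib

/-!
Stack the operators into the column `C : H → ⨁ₖ Kₖ`, `C h = (Vₖ h)ₖ`. Then `∑ₖ Vₖ* ξₖ = C* ξ`, and
`P = C C*` is the positive block matrix with entries `Vₗ Vₖ*`. The hypothesis says that `P` commutes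
with the diagonal operator `D = diag(bₖ)`, whose norm is at most `maxₖ ‖bₖ‖`; hence so does `√P`. As
`‖C* ξ‖ = ‖√P ξ‖`, it follows that `‖C* D ξ‖ = ‖√P D ξ‖ = ‖D √P ξ‖ ≤ ‖D‖ ‖C* ξ‖`.
-/

open ContinuousLinearMap
open scoped InnerProduct

section SelfCompAdjoint

variable {H K : Type*}
  [NormedAddCommGroup H] [InnerProductSpace ℂ H] [CompleteSpace H]
  [NormedAddCommGroup K] [InnerProductSpace ℂ K] [CompleteSpace K]

theorem norm_sqrt_self_comp_adjoint_apply (T : H →L[ℂ] K) (x : K) :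
    ‖CFC.sqrt (T ∘L T†) x‖ = ‖(T†) x‖ := by
  have nonneg : 0 ≤ T ∘L T† := (nonneg_iff_isPositive _).2 (isPositive_self_comp_adjoint T)
  have adjoint_sqrt : (CFC.sqrt (T ∘L T†))† = CFC.sqrt (T ∘L T†) :=
    IsSelfAdjoint.of_nonneg (CFC.sqrt_nonneg _)
  have sqrt_comp_sqrt : CFC.sqrt (T ∘L T†) ∘L CFC.sqrt (T ∘L T†) = T ∘L T† :=
    CFC.sqrt_mul_sqrt_self _ nonneg
  rw [apply_norm_eq_sqrt_inner_adjoint_left, apply_norm_eq_sqrt_inner_adjoint_left (T†),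
    adjoint_sqrt, sqrt_comp_sqrt, adjoint_adjoint]

theorem norm_adjoint_apply_le_of_commute {T : H →L[ℂ] K} {B : K →L[ℂ] K}
    (hB : Commute B (T ∘L T†)) (x : K) :
    ‖(T†) (B x)‖ ≤ ‖B‖ * ‖(T†) x‖ := by
  have sqrt_commute : Commute (CFC.sqrt (T ∘L T†)) B := hB.symm.cfcₙ_nnreal _
  calc ‖(T†) (B x)‖
    _ = ‖CFC.sqrt (T ∘L T†) (B x)‖ := (norm_sqrt_self_comp_adjoint_apply T _).symm
    _ = ‖B (CFC.sqrt (T ∘L T†) x)‖ := congrArg norm (DFunLike.congr_fun sqrt_commute.eq x)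
    _ ≤ ‖B‖ * ‖CFC.sqrt (T ∘L T†) x‖ := B.le_opNorm _
    _ = ‖B‖ * ‖(T†) x‖ := by rw [norm_sqrt_self_comp_adjoint_apply]

end SelfCompAdjoint

section BlockOperators

variable {𝕜 ι H : Type*} {K : ι → Type*} [NontriviallyNormedField 𝕜]
  [NormedAddCommGroup H] [NormedSpace 𝕜 H]
  [∀ k, NormedAddCommGroup (K k)] [∀ k, NormedSpace 𝕜 (K k)]

/-- The column operator `h ↦ (V k h)ₖ` from `H` into the `ℓ²` direct sum of the `K k`; between
Hilbert spaces its adjoint is the row operator `x ↦ ∑ₖ (V k)* (x k)`. -/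
noncomputable def columnOperator (V : ∀ k, H →L[𝕜] K k) : H →L[𝕜] PiLp 2 K :=
  (PiLp.continuousLinearEquiv 2 𝕜 K).symm ∘L ContinuousLinearMap.pi V

/-- The diagonal operator `(x k)ₖ ↦ (b k (x k))ₖ` on the `ℓ²` direct sum of the `K k`, which
applies all the operators `b k` at once. -/
noncomputable def diagonalOperator (b : ∀ k, K k →L[𝕜] K k) : PiLp 2 K →L[𝕜] PiLp 2 K :=
  (PiLp.continuousLinearEquiv 2 𝕜 K).symm ∘L piMap b ∘L (PiLp.continuousLinearEquiv 2 𝕜 K)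

@[simp]
theorem columnOperator_apply (V : ∀ k, H →L[𝕜] K k) (h : H) (k : ι) :
    columnOperator V h k = V k h := rfl

@[simp]
theorem diagonalOperator_apply (b : ∀ k, K k →L[𝕜] K k) (x : PiLp 2 K) (k : ι) :
    diagonalOperator b x k = b k (x k) := rfl

theorem norm_diagonalOperator_le [Fintype ι] (b : ∀ k, K k →L[𝕜] K k) :
    ‖diagonalOperator b‖ ≤ ‖b‖ := by
  refine opNorm_le_bound _ (norm_nonneg b) fun x => le_of_sq_le_sq ?_ (by positivity)
  calc ‖diagonalOperator b x‖ ^ 2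
    _ = ∑ k, ‖b k (x k)‖ ^ 2 := PiLp.norm_sq_eq_of_L2 _ _
    _ ≤ ∑ k, (‖b‖ * ‖x k‖) ^ 2 := by
      gcongr with k
      exact (b k).le_of_opNorm_le (norm_le_pi_norm b k) (x k)
    _ = (‖b‖ * ‖x‖) ^ 2 := by
      simp only [mul_pow, PiLp.norm_sq_eq_of_L2, Finset.mul_sum]

end BlockOperators

section BlockGram

variable {𝕜 ι H : Type*} {K : ι → Type*} [RCLike 𝕜] [Fintype ι]
  [NormedAddCommGroup H] [InnerProductSpace 𝕜 H] [CompleteSpace H]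
  [∀ k, NormedAddCommGroup (K k)] [∀ k, InnerProductSpace 𝕜 (K k)] [∀ k, CompleteSpace (K k)]

theorem adjoint_columnOperator_apply (V : ∀ k, H →L[𝕜] K k) (x : PiLp 2 K) :
    ((columnOperator V)†) x = ∑ k, ((V k)†) (x k) := by
  refine ext_inner_right 𝕜 fun h => ?_
  simp only [adjoint_inner_left, PiLp.inner_apply, sum_inner, columnOperator_apply]

theorem commute_diagonalOperator_columnOperator_comp_adjoint
    {V : ∀ k, H →L[𝕜] K k} {b : ∀ k, K k →L[𝕜] K k}
    (hb : ∀ k l, b l ∘L V l ∘L (V k)† = (V l ∘L (V k)†) ∘L b k) :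
    Commute (diagonalOperator b) (columnOperator V ∘L (columnOperator V)†) := by
  ext x l
  have entry (k : ι) : b l (V l (((V k)†) (x k))) = V l (((V k)†) (b k (x k))) :=
    DFunLike.congr_fun (hb k l) (x k)
  simp [adjoint_columnOperator_apply, entry]

end BlockGram

theorem statement1_general {ι H : Type*} {K : ι → Type*} [Fintype ι]
    [NormedAddCommGroup H] [InnerProductSpace ℂ H] [CompleteSpace H]
    [∀ k, NormedAddCommGroup (K k)] [∀ k, InnerProductSpace ℂ (K k)] [∀ k, CompleteSpace (K k)]
    (V : ∀ k, H →L[ℂ] K k) (b : ∀ k, K k →L[ℂ] K k)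
    (hb : ∀ k l, b l ∘L V l ∘L (V k)† = (V l ∘L (V k)†) ∘L b k) (ξ : ∀ k, K k) :
    ‖∑ k, ((V k)†) (b k (ξ k))‖ ≤ ‖b‖ * ‖∑ k, ((V k)†) (ξ k)‖ := by
  have column_bound := norm_adjoint_apply_le_of_commute
    (commute_diagonalOperator_columnOperator_comp_adjoint hb) (WithLp.toLp 2 ξ)
  simp only [adjoint_columnOperator_apply, diagonalOperator_apply] at column_bound
  exact column_bound.trans (by gcongr; exact norm_diagonalOperator_le b)

/-- If `b ∈ B(K)` commutes with all the operators `V l ∘ (V k)*`,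
then `‖Σ_k (V k)* (b (ξ k))‖ ≤ ‖b‖ · ‖Σ_k (V k)* (ξ k)‖`. -/
theorem statement1
    {H K : Type*}
    [NormedAddCommGroup H] [InnerProductSpace ℂ H] [CompleteSpace H]
    [NormedAddCommGroup K] [InnerProductSpace ℂ K] [CompleteSpace K]
    (n : ℕ) (V : Fin n → (H →L[ℂ] K)) (b : K →L[ℂ] K)
    (hcomm : ∀ k l : Fin n, Commute b ((V l) ∘L (ContinuousLinearMap.adjoint (V k))))
    (ξ : Fin n → K) :
    ‖∑ k, ContinuousLinearMap.adjoint (V k) (b (ξ k))‖ ≤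
      ‖b‖ * ‖∑ k, ContinuousLinearMap.adjoint (V k) (ξ k)‖ :=
  (statement1_general V (fun _ => b) (fun k l => (hcomm k l).eq) ξ).trans
    (by gcongr; exact pi_norm_const_le b)
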